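/- arXiv:1606.03818 — 2 statements merged into one kernel-verified Lean document; each statement's English description precedes it below -/
import Mathlib

section
/- Let n = 2, p ∈ [2,∞), and Ω a bounded domain with first Dirichlet Laplacian eigenvalue λ₁. Let ν be the largest integer with ν ≤ p/2, and τ ≥ 0. Then for all u ∈ H₀¹(Ω), ‖u‖_{L^p(Ω)} ≤ (1/2)^{1/2 + (2ν−3)/p} [ (p/2)(p/2 − 1)⋯(p/2 − ν + 2) ]^{2/p} (λ₁ + (p/2)τ)^{−1/p} · ‖u‖_V, where ‖u‖_V² = ‖∇u‖²_{L²} + τ‖u‖²_{L²} and the bracketed product is 1 when ν = 1. -/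
open MeasureTheory

noncomputable section

/-- Rayleigh quotients of nontrivial smooth test functions compactly supported in `D`. -/
def RayleighSet (n : ℕ) (D : Set (EuclideanSpace ℝ (Fin n))) : Set ℝ :=
  {r | ∃ u : EuclideanSpace ℝ (Fin n) → ℝ, ContDiff ℝ (⊤ : ℕ∞) u ∧ HasCompactSupport u ∧
    tsupport u ⊆ D ∧ (∫ x, (u x) ^ 2) ≠ 0 ∧
    r = (∫ x, ‖gradient u x‖ ^ 2) / (∫ x, (u x) ^ 2)}

/-- The first Dirichlet eigenvalue `λ₁(D)` of `-Δ` on `D` (variational characterization). -/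
def lam1 (n : ℕ) (D : Set (EuclideanSpace ℝ (Fin n))) : ℝ := sInf (RayleighSet n D)

abbrev E2 := EuclideanSpace ℝ (Fin 2)

lemma oneD (g g' : ℝ → ℝ) (hg : ∀ t, HasDerivAt g (g' t) t) (hc : Continuous g')
    (hs : HasCompactSupport g) (x : ℝ) : |g x| ≤ (1/2) * ∫ t, |g' t| := by
  have hd : deriv g = g' := funext fun t => (hg t).deriv
  have h1 : ContDiff ℝ 1 g := by
    rw [contDiff_one_iff_deriv]
    exact ⟨fun t => (hg t).differentiableAt, hd ▸ hc⟩
  have hs' : HasCompactSupport g' := hd ▸ hs.deriv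
  have hi : Integrable g' := hc.integrable_of_hasCompactSupport hs'
  have a1 := hs.integral_Iic_deriv_eq h1 x
  have a2 := hs.integral_Ioi_deriv_eq h1 x
  rw [hd] at a1 a2
  have b1 : |g x| ≤ ∫ t in Set.Iic x, |g' t| := by
    rw [← a1]; exact norm_integral_le_integral_norm (μ := volume.restrict (Set.Iic x)) g'
  have b2 : |g x| ≤ ∫ t in Set.Ioi x, |g' t| := by
    rw [← abs_neg, ← a2]; exact norm_integral_le_integral_norm (μ := volume.restrict (Set.Ioi x)) g'
  have := intervalIntegral.integral_Iic_add_Ioi (b := x) (f := fun t => |g' t|) (μ := volume)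
    hi.abs.integrableOn hi.abs.integrableOn
  linarith

def TT : (ℝ × ℝ) ≃L[ℝ] E2 :=
  (ContinuousLinearEquiv.finTwoArrow ℝ ℝ).symm.trans (PiLp.continuousLinearEquiv 2 ℝ (fun _ : Fin 2 => ℝ)).symm

lemma TT_mp : MeasurePreserving TT := by
  have h := (PiLp.volume_preserving_toLp (Fin 2)).comp ((volume_preserving_finTwoArrow ℝ).symm)
  exact h

lemma TT_int (f : E2 → ℝ) : ∫ z, f (TT z) = ∫ x, f x :=
  TT_mp.integral_comp TT.toHomeomorph.measurableEmbedding f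

lemma TT_zero (z : ℝ × ℝ) : TT z 0 = z.1 := rfl
lemma TT_one (z : ℝ × ℝ) : TT z 1 = z.2 := rfl

lemma prodLemma (f fx fy : ℝ × ℝ → ℝ) (hf : Continuous f) (hs : HasCompactSupport f)
    (hfx : Continuous fx) (hfy : Continuous fy) (sx : HasCompactSupport fx) (sy : HasCompactSupport fy)
    (dx : ∀ x y, HasDerivAt (fun t => f (t, y)) (fx (x, y)) x)
    (dy : ∀ x y, HasDerivAt (fun t => f (x, t)) (fy (x, y)) y) :
    ∫ z, f z ^ 2 ≤ (1/4) * (∫ z, |fx z|) * ∫ z, |fy z| := by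
  have ix : Integrable fx := hfx.integrable_of_hasCompactSupport sx
  have iy : Integrable fy := hfy.integrable_of_hasCompactSupport sy
  have b1 : ∀ x y, |f (x, y)| ≤ (1/2) * ∫ t, |fx (t, y)| := fun x y =>
    oneD (fun t => f (t, y)) (fun t => fx (t, y)) (fun t => dx t y) (by fun_prop)
      (hs.comp_isClosedEmbedding (Isometry.isClosedEmbedding (f := fun t : ℝ => (t, y))
        (Isometry.of_dist_eq fun a b => by simp [Prod.dist_eq]))) x
  have b2 : ∀ x y, |f (x, y)| ≤ (1/2) * ∫ t, |fy (x, t)| := fun x y =>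
    oneD (fun t => f (x, t)) (fun t => fy (x, t)) (fun t => dy x t) (by fun_prop)
      (hs.comp_isClosedEmbedding (Isometry.isClosedEmbedding (f := fun t : ℝ => (x, t))
        (Isometry.of_dist_eq fun a b => by simp [Prod.dist_eq]))) y
  have iG : Integrable (fun y => ∫ t, |fx (t, y)|) := (Integrable.integral_prod_right (f := fun z => |fx z|) ix.abs)
  have iH : Integrable (fun x => ∫ t, |fy (x, t)|) := (Integrable.integral_prod_left (f := fun z => |fy z|) iy.abs)
  have e1 : ∫ z, |fx z| = ∫ y, ∫ t, |fx (t, y)| := integral_prod_symm (fun z => |fx z|) ix.abs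
  have e2 : ∫ z, |fy z| = ∫ x, ∫ t, |fy (x, t)| := integral_prod (fun z => |fy z|) iy.abs
  calc ∫ z, f z ^ 2 ≤ ∫ z : ℝ × ℝ, ((1/2) * ∫ t, |fy (z.1, t)|) * ((1/2) * ∫ t, |fx (t, z.2)|) := by
        refine integral_mono_of_nonneg (.of_forall fun z => by positivity)
          ((iH.const_mul (1/2)).mul_prod (iG.const_mul (1/2))) (.of_forall fun z => ?_)
        show f z ^ 2 ≤ _
        rw [← sq_abs, sq]
        exact mul_le_mul (b2 z.1 z.2) (b1 z.1 z.2) (abs_nonneg _) (by positivity)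
    _ = ((1/2) * ∫ x, ∫ t, |fy (x, t)|) * ((1/2) * ∫ y, ∫ t, |fx (t, y)|) := by
        rw [← integral_const_mul, ← integral_const_mul]
        exact integral_prod_mul (fun x => (1/2) * ∫ t, |fy (x, t)|) (fun y => (1/2) * ∫ t, |fx (t, y)|)
    _ = _ := by rw [e1, e2]; ring

lemma grad_cont {w : E2 → ℝ} (hw : ContDiff ℝ 1 w) : Continuous (gradient w) :=
  (InnerProductSpace.toDual ℝ E2).symm.continuous.comp (hw.continuous_fderiv one_ne_zero)

lemma grad_supp {w : E2 → ℝ} (hs : HasCompactSupport w) : HasCompactSupport (gradient w) := by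
  have := (hs.fderiv (𝕜 := ℝ)).comp_left (g := (InnerProductSpace.toDual ℝ E2).symm) (map_zero _)
  exact this

lemma grad_dir {w : E2 → ℝ} (hw : ContDiff ℝ 1 w) (x v : E2) :
    fderiv ℝ w x v = inner ℝ (gradient w x) v := by
  rw [← toDual_gradient]; rfl

lemma key {w : E2 → ℝ} (hw : ContDiff ℝ 1 w) (hs : HasCompactSupport w) :
    ∫ x, w x ^ 2 ≤ (1/8) * (∫ x, ‖gradient w x‖) ^ 2 := by
  have gc := grad_cont hw
  have gs := grad_supp hs
  have dw : ∀ x, HasFDerivAt w (fderiv ℝ w x) x := fun x => (hw.differentiable one_ne_zero x).hasFDerivAt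
  have cl := TT.toHomeomorph.isClosedEmbedding
  have P := prodLemma (fun z => w (TT z)) (fun z => gradient w (TT z) 0) (fun z => gradient w (TT z) 1)
    (by have := hw.continuous; fun_prop) (hs.comp_isClosedEmbedding cl)
    (by fun_prop) (by fun_prop)
    ((gs.comp_left (g := fun v : E2 => v 0) rfl).comp_isClosedEmbedding cl)
    ((gs.comp_left (g := fun v : E2 => v 1) rfl).comp_isClosedEmbedding cl)
    (fun x y => by
      have h1 : HasDerivAt (fun t : ℝ => TT (t, y)) (TT (1, 0)) x :=
        (TT.toContinuousLinearMap.hasFDerivAt).comp_hasDerivAt x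
          ((hasDerivAt_id x).prodMk (hasDerivAt_const x y))
      have := (dw (TT (x, y))).comp_hasDerivAt x h1
      rw [grad_dir hw] at this
      have e : inner ℝ (gradient w (TT (x, y))) (TT (1, 0)) = gradient w (TT (x, y)) 0 := by
        rw [PiLp.inner_apply]; simp [Fin.sum_univ_two, TT_zero, TT_one]
      rw [e] at this
      exact this)
    (fun x y => by
      have h1 : HasDerivAt (fun t : ℝ => TT (x, t)) (TT (0, 1)) y :=
        (TT.toContinuousLinearMap.hasFDerivAt).comp_hasDerivAt y
          ((hasDerivAt_const y x).prodMk (hasDerivAt_id y))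
      have := (dw (TT (x, y))).comp_hasDerivAt y h1
      rw [grad_dir hw] at this
      have e : inner ℝ (gradient w (TT (x, y))) (TT (0, 1)) = gradient w (TT (x, y)) 1 := by
        rw [PiLp.inner_apply]; simp [Fin.sum_univ_two, TT_zero, TT_one]
      rw [e] at this
      exact this)
  rw [TT_int (fun x => w x ^ 2), TT_int (fun x => |gradient w x 0|), TT_int (fun x => |gradient w x 1|)] at P
  have i0 : Integrable (fun x => |gradient w x 0|) :=
    (Continuous.integrable_of_hasCompactSupport (by fun_prop) (gs.comp_left (g := fun v : E2 => v 0) rfl)).abs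
  have i1 : Integrable (fun x => |gradient w x 1|) :=
    (Continuous.integrable_of_hasCompactSupport (by fun_prop) (gs.comp_left (g := fun v : E2 => v 1) rfl)).abs
  have ig : Integrable (fun x => ‖gradient w x‖) := (gc.integrable_of_hasCompactSupport gs).norm
  have hsum : (∫ x, |gradient w x 0|) + ∫ x, |gradient w x 1| ≤ √2 * ∫ x, ‖gradient w x‖ := by
    rw [← integral_add i0 i1, ← integral_const_mul]
    refine integral_mono (i0.add i1) (ig.const_mul _) fun x => ?_
    show |gradient w x 0| + |gradient w x 1| ≤ √2 * ‖gradient w x‖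
    rw [EuclideanSpace.norm_eq, ← Real.sqrt_mul (by norm_num)]
    apply Real.le_sqrt_of_sq_le
    simp only [Fin.sum_univ_two, Real.norm_eq_abs]
    nlinarith [sq_nonneg (|gradient w x 0| - |gradient w x 1|)]
  have n0 : 0 ≤ ∫ x, |gradient w x 0| := integral_nonneg fun _ => abs_nonneg _
  have n1 : 0 ≤ ∫ x, |gradient w x 1| := integral_nonneg fun _ => abs_nonneg _
  have hsq := pow_le_pow_left₀ (add_nonneg n0 n1) hsum 2
  rw [mul_pow, Real.sq_sqrt (by norm_num)] at hsq
  nlinarith [sq_nonneg ((∫ x, |gradient w x 0|) - ∫ x, |gradient w x 1|)]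

lemma cs {f g : E2 → ℝ} (hf : Continuous f) (hg : Continuous g) (sf : HasCompactSupport f)
    (sg : HasCompactSupport g) (f0 : ∀ x, 0 ≤ f x) (g0 : ∀ x, 0 ≤ g x) :
    (∫ x, f x * g x) ^ 2 ≤ (∫ x, f x ^ 2) * ∫ x, g x ^ 2 := by
  have := integral_mul_le_Lp_mul_Lq_of_nonneg (μ := volume) (Real.HolderConjugate.two_two)
    (.of_forall f0) (.of_forall g0) (hf.memLp_of_hasCompactSupport sf) (hg.memLp_of_hasCompactSupport sg)
  simp only [Real.rpow_two, ← Real.sqrt_eq_rpow] at this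
  have h := pow_le_pow_left₀ (integral_nonneg fun x => mul_nonneg (f0 x) (g0 x)) this 2
  rwa [mul_pow, Real.sq_sqrt (integral_nonneg fun x => sq_nonneg _),
    Real.sq_sqrt (integral_nonneg fun x => sq_nonneg _)] at h

lemma pow_supp {u : E2 → ℝ} (hs : HasCompactSupport u) {q : ℝ} (hq : 0 < q) :
    HasCompactSupport (fun x => |u x| ^ q) :=
  hs.comp_left (g := fun t : ℝ => |t| ^ q) (by simp [hq.ne'])

lemma pow_cont {u : E2 → ℝ} (hu : Continuous u) {q : ℝ} (hq : 0 < q) :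
    Continuous (fun x => |u x| ^ q) :=
  hu.abs.rpow_const fun _ => .inr hq.le

lemma stepLemma {u : E2 → ℝ} (hu : ContDiff ℝ 1 u) (hs : HasCompactSupport u) {q : ℝ} (hq : 2 ≤ q) :
    ∫ x, |u x| ^ (2 * q) ≤ q ^ 2 / 8 * (∫ x, ‖gradient u x‖ ^ 2) * ∫ x, |u x| ^ (2 * q - 2) := by
  have hw : ContDiff ℝ 1 (fun x => |u x| ^ q) := hu.norm_rpow (by linarith)
  have K := key hw (pow_supp hs (by linarith))
  have hg : ∀ x, ‖gradient (fun x => |u x| ^ q) x‖ = q * (|u x| ^ (q - 1) * ‖gradient u x‖) := by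
    intro x
    have h := (hasDerivAt_abs_rpow (u x) (p := q) (by linarith)).comp_hasFDerivAt x
      (hu.differentiable one_ne_zero x).hasFDerivAt
    have h2 : fderiv ℝ (fun x => |u x| ^ q) x = _ := h.fderiv
    have n1 : ∀ w : E2 → ℝ, ‖gradient w x‖ = ‖fderiv ℝ w x‖ := fun w => by simp [gradient]
    rw [n1, n1, h2, norm_smul, norm_mul, norm_mul, Real.norm_eq_abs, Real.norm_eq_abs, Real.norm_eq_abs,
      abs_of_nonneg (show 0 ≤ q by linarith), abs_of_nonneg (Real.rpow_nonneg (abs_nonneg _) _)]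
    have : |u x| ^ (q - 2) * |u x| = |u x| ^ (q - 1) := by
      rw [← Real.rpow_add_one' (abs_nonneg _) (by linarith)]; congr 1; ring
    rw [mul_assoc q, this, mul_assoc]
  simp_rw [hg] at K
  rw [integral_const_mul, mul_pow] at K
  have C := cs (pow_cont hu.continuous (q := q - 1) (by linarith)) (grad_cont hu).norm
    (pow_supp hs (q := q - 1) (by linarith)) (grad_supp hs).norm
    (fun x => Real.rpow_nonneg (abs_nonneg _) _) (fun x => norm_nonneg _)
  have e : ∀ (r : ℝ) x, (|u x| ^ r) ^ 2 = |u x| ^ (2 * r) := fun r x => by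
    rw [← Real.rpow_mul_natCast (abs_nonneg _)]; congr 1; push_cast; ring
  simp_rw [e] at K C
  rw [show 2 * (q - 1) = 2 * q - 2 by ring] at C
  refine K.trans ?_
  have := mul_le_mul_of_nonneg_left C (show 0 ≤ q ^ 2 / 8 by positivity)
  linarith

lemma iter {u : E2 → ℝ} (hu : ContDiff ℝ 1 u) (hs : HasCompactSupport u) {q : ℝ} (n : ℕ) (hq : (n : ℝ) + 1 ≤ q) :
    ∫ x, |u x| ^ (2 * q) ≤ (1/8) ^ n * (∏ i ∈ Finset.range n, (q - (i : ℝ))) ^ 2 *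
      (∫ x, ‖gradient u x‖ ^ 2) ^ n * ∫ x, |u x| ^ (2 * (q - n)) := by
  induction n with
  | zero => simp
  | succ n ih =>
    push_cast at hq
    refine (ih (by linarith)).trans ?_
    have S := stepLemma hu hs (q := q - n) (by linarith)
    rw [show 2 * (q - n) - 2 = 2 * (q - ((n + 1 : ℕ) : ℝ)) by push_cast; ring] at S
    have A0 : 0 ≤ ∫ x, ‖gradient u x‖ ^ 2 := integral_nonneg fun x => sq_nonneg _
    refine (mul_le_mul_of_nonneg_left S (by positivity)).trans (le_of_eq ?_)
    rw [Finset.prod_range_succ]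
    ring

lemma interp {u : E2 → ℝ} (hu : ContDiff ℝ 1 u) (hs : HasCompactSupport u) {r : ℝ} (hr : 1 ≤ r) (hr2 : r < 2) :
    ∫ x, |u x| ^ (2 * r) ≤ (∫ x, u x ^ 2) * ((1/2) * ∫ x, ‖gradient u x‖ ^ 2) ^ (r - 1) := by
  have S := stepLemma hu hs (q := 2) le_rfl
  have A0 : 0 ≤ ∫ x, ‖gradient u x‖ ^ 2 := integral_nonneg fun x => sq_nonneg _
  have B0 : 0 ≤ ∫ x, u x ^ 2 := integral_nonneg fun x => sq_nonneg _
  have e2 : ∀ x, |u x| ^ (2 : ℝ) = u x ^ 2 := fun x => by simp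
  rw [show (2 : ℝ) * 2 - 2 = 2 by norm_num] at S
  simp_rw [e2] at S
  rcases hr.eq_or_lt with rfl | hr1
  · simp
  have hc : (1 / (2 - r)).HolderConjugate (1 / (r - 1)) := by
    rw [Real.holderConjugate_iff]
    refine ⟨by rw [lt_div_iff₀ (by linarith)]; linarith, by simp; norm_num⟩
  have H := integral_mul_le_Lp_mul_Lq_of_nonneg (μ := volume) hc
    (f := fun x => |u x| ^ (2 * (2 - r))) (g := fun x => |u x| ^ (4 * (r - 1)))
    (.of_forall fun x => Real.rpow_nonneg (abs_nonneg _) _) (.of_forall fun x => Real.rpow_nonneg (abs_nonneg _) _)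
    ((pow_cont hu.continuous (by linarith)).memLp_of_hasCompactSupport (pow_supp hs (by linarith)))
    ((pow_cont hu.continuous (by linarith)).memLp_of_hasCompactSupport (pow_supp hs (by linarith)))
  have h1 : ∀ x, |u x| ^ (2 * (2 - r)) * |u x| ^ (4 * (r - 1)) = |u x| ^ (2 * r) := fun x => by
    rw [← Real.rpow_add' (abs_nonneg _) (by nlinarith)]; congr 1; ring
  have h2 : ∀ x, (|u x| ^ (2 * (2 - r))) ^ (1 / (2 - r)) = u x ^ 2 := fun x => by
    rw [← Real.rpow_mul (abs_nonneg _), mul_assoc, mul_one_div_cancel (by linarith), mul_one, e2]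
  have h3 : ∀ x, (|u x| ^ (4 * (r - 1))) ^ (1 / (r - 1)) = |u x| ^ (2 * 2 : ℝ) := fun x => by
    rw [← Real.rpow_mul (abs_nonneg _), mul_assoc, mul_one_div_cancel (by linarith)]; norm_num
  simp_rw [h1, h2, h3, one_div_one_div] at H
  refine H.trans ?_
  have S' : ∫ x, |u x| ^ (2 * 2 : ℝ) ≤ (∫ x, u x ^ 2) * ((1/2) * ∫ x, ‖gradient u x‖ ^ 2) := by
    refine S.trans (le_of_eq ?_); ring
  calc _ ≤ (∫ x, u x ^ 2) ^ (2 - r) * ((∫ x, u x ^ 2) * ((1/2) * ∫ x, ‖gradient u x‖ ^ 2)) ^ (r - 1) := by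
        have h0 : 0 ≤ ∫ x, |u x| ^ (2 * 2 : ℝ) := integral_nonneg fun x => Real.rpow_nonneg (abs_nonneg _) _
        have hr0 : 0 ≤ r - 1 := by linarith
        exact mul_le_mul_of_nonneg_left (Real.rpow_le_rpow h0 S' hr0) (Real.rpow_nonneg B0 _)
    _ = _ := by
        rw [Real.mul_rpow B0 (by positivity), ← mul_assoc, ← Real.rpow_add' B0 (by norm_num)]
        congr 1
        convert Real.rpow_one _ using 2
        ring

lemma poincare {Ω : Set E2} (hΩb : Bornology.IsBounded Ω)
    {u : E2 → ℝ} (hu : ContDiff ℝ 1 u) (hs : HasCompactSupport u) (hsub : tsupport u ⊆ Ω) :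
    ∫ x, u x ^ 2 ≤ (volume.real Ω / 8) * ∫ x, ‖gradient u x‖ ^ 2 := by
  have K := key hu hs
  have hfin : IsFiniteMeasure (volume.restrict Ω) := ⟨by simpa using hΩb.measure_lt_top⟩
  have hg0 : ∀ x, x ∉ Ω → gradient u x = 0 := fun x hx => by
    have : fderiv ℝ u x = 0 := by
      by_contra h
      exact hx (hsub (support_fderiv_subset ℝ (f := u) h))
    simp [gradient, this]
  have C := integral_mul_le_Lp_mul_Lq_of_nonneg (μ := volume.restrict Ω) (Real.HolderConjugate.two_two)
    (f := fun _ => (1 : ℝ)) (g := fun x => ‖gradient u x‖)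
    (.of_forall fun _ => zero_le_one) (.of_forall fun x => norm_nonneg _) (memLp_const _)
    (((grad_cont hu).norm.memLp_of_hasCompactSupport (grad_supp hs).norm).restrict _)
  simp only [Real.rpow_two, ← Real.sqrt_eq_rpow, one_mul, one_pow, integral_const, smul_eq_mul, mul_one,
    measureReal_restrict_apply_univ] at C
  rw [setIntegral_eq_integral_of_forall_compl_eq_zero (fun x hx => by simp [hg0 x hx]),
    setIntegral_eq_integral_of_forall_compl_eq_zero (fun x hx => by simp [hg0 x hx])] at C
  have h := pow_le_pow_left₀ (integral_nonneg fun x => norm_nonneg _) C 2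
  rw [mul_pow, Real.sq_sqrt (by positivity),
    Real.sq_sqrt (integral_nonneg fun x => sq_nonneg _)] at h
  linarith

lemma bern {A B q t l : ℝ} (hA : 0 < A) (hB : 0 ≤ B) (hq : 1 ≤ q) (ht : 0 ≤ t) (hl : l * B ≤ A) :
    A ^ (q - 1) * B * (l + q * t) ≤ (A + t * B) ^ q := by
  have h := one_add_mul_self_le_rpow_one_add (s := t * B / A) (p := q)
    (by have : 0 ≤ t * B / A := by positivity
        linarith) hq
  have e : A + t * B = A * (1 + t * B / A) := by field_simp
  have e2 : A ^ q = A ^ (q - 1) * A := by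
    rw [← Real.rpow_add_one hA.ne']; congr 1; ring
  rw [e, Real.mul_rpow hA.le (by positivity)]
  refine le_trans ?_ (mul_le_mul_of_nonneg_left h (by positivity))
  rw [e2, mul_assoc, mul_assoc]
  refine mul_le_mul_of_nonneg_left ?_ (by positivity)
  have : A * (1 + q * (t * B / A)) = A + q * t * B := by field_simp
  rw [this]; linarith

lemma mainBound {u : E2 → ℝ} (hu : ContDiff ℝ 1 u) (hs : HasCompactSupport u) {p : ℝ} (hp : 2 ≤ p)
    {ν : ℕ} (hν : ν = Nat.floor (p / 2)) :
    0 ≤ ∏ i ∈ Finset.range (ν - 1), (p/2 - (i : ℝ)) ∧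
    ∫ x, |u x| ^ p ≤ ((1:ℝ)/2) ^ (p/2 + (2 * (ν : ℝ) - 3)) * (∏ i ∈ Finset.range (ν - 1), (p/2 - (i : ℝ))) ^ 2 *
      ((∫ x, ‖gradient u x‖ ^ 2) ^ (p / 2 - 1) * ∫ x, u x ^ 2) := by
  have h1 : (ν : ℝ) ≤ p / 2 := hν ▸ Nat.floor_le (by linarith)
  have h2 : p / 2 < ν + 1 := hν ▸ Nat.lt_floor_add_one _
  have h3 : 1 ≤ ν := by rw [hν]; exact Nat.le_floor (by push_cast; linarith)
  obtain ⟨n, rfl⟩ : ∃ n, ν = n + 1 := ⟨ν - 1, by omega⟩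
  clear hν h3
  push_cast at h1 h2 ⊢
  constructor
  · refine Finset.prod_nonneg fun i hi => ?_
    have : (i : ℝ) < n := by exact_mod_cast Finset.mem_range.1 hi
    linarith
  have I1 := iter hu hs (q := p / 2) n h1
  have I2 := interp hu hs (r := p / 2 - n) (by linarith) (by linarith)
  rw [show 2 * (p / 2) = p by ring] at I1
  have A0 : 0 ≤ ∫ x, ‖gradient u x‖ ^ 2 := integral_nonneg fun x => sq_nonneg _
  refine I1.trans ((mul_le_mul_of_nonneg_left I2 (by positivity)).trans (le_of_eq ?_))
  generalize (∫ x, ‖gradient u x‖ ^ 2) = A at *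
  rw [Real.mul_rpow (by norm_num) A0]
  have a1 : A ^ (p / 2 - 1) = A ^ n * A ^ (p / 2 - n - 1) := by
    rcases A0.eq_or_lt with rfl | hA
    · by_cases hn : n = 0
      · subst hn; simp
      · by_cases hp2 : p / 2 - 1 = 0
        · have : (1 : ℝ) ≤ n := by exact_mod_cast Nat.one_le_iff_ne_zero.2 hn
          linarith
        · rw [Real.zero_rpow hp2]; simp [hn]
    · rw [← Real.rpow_natCast, ← Real.rpow_add hA]; congr 1; ring
  have a2 : ((1:ℝ)/2) ^ (p/2 + (2 * ((n : ℝ) + 1) - 3)) = (1/8) ^ n * (1/2) ^ (p / 2 - n - 1) := by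
    rw [show (1/8 : ℝ) = (1/2) ^ 3 by norm_num, ← pow_mul, ← Real.rpow_natCast, ← Real.rpow_add (by norm_num)]
    congr 1; push_cast; ring
  rw [a1, a2]; ring

/-- **Plum's explicit embedding constant `H₀¹(Ω) ↪ L^p(Ω)` for `n = 2`.**
Let `Ω ⊂ ℝ²` be a bounded domain with first Dirichlet Laplacian eigenvalue `λ₁`,
`p ∈ [2,∞)`, `ν` the largest integer with `ν ≤ p/2`, and `τ ≥ 0`.  Then for every
`u ∈ H₀¹(Ω)` (represented by smooth functions compactly supported in `Ω`),
`‖u‖_{L^p} ≤ (1/2)^{1/2+(2ν−3)/p} [(p/2)(p/2−1)⋯(p/2−ν+2)]^{2/p} (λ₁+(p/2)τ)^{−1/p} ‖u‖_V`,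
with `‖u‖_V² = ‖∇u‖²_{L²} + τ‖u‖²_{L²}` (the bracketed product is `1` when `ν = 1`). -/
theorem stmt14 (Ω : Set (EuclideanSpace ℝ (Fin 2)))
    (hΩo : IsOpen Ω) (hΩc : IsConnected Ω) (hΩb : Bornology.IsBounded Ω)
    (p : ℝ) (hp : 2 ≤ p) (ν : ℕ) (hν : ν = Nat.floor (p / 2))
    (τ : ℝ) (hτ : 0 ≤ τ)
    (u : EuclideanSpace ℝ (Fin 2) → ℝ)
    (hu : ContDiff ℝ (⊤ : ℕ∞) u) (hsupp : HasCompactSupport u) (hsub : tsupport u ⊆ Ω) :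
    (∫ x in Ω, |u x| ^ p) ^ (1/p) ≤
      ((1:ℝ)/2) ^ ((1:ℝ)/2 + (2 * (ν : ℝ) - 3)/p) *
        (∏ i ∈ Finset.range (ν - 1), (p/2 - (i : ℝ))) ^ (2/p) *
        (lam1 2 Ω + (p/2) * τ) ^ (-(1:ℝ)/p) *
        Real.sqrt ((∫ x in Ω, ‖gradient u x‖ ^ 2) + τ * ∫ x in Ω, (u x) ^ 2) := by
  have hu1 : ContDiff ℝ 1 u := hu.of_le (by exact_mod_cast le_top)
  have hp0 : 0 < p := by linarith
  have hu0 : ∀ x, x ∉ Ω → u x = 0 := fun x hx => by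
    by_contra h; exact hx (hsub (subset_tsupport u h))
  have hg0 : ∀ x, x ∉ Ω → gradient u x = 0 := fun x hx => by
    have : fderiv ℝ u x = 0 := by
      by_contra h
      exact hx (hsub (support_fderiv_subset ℝ (f := u) h))
    simp [gradient, this]
  rw [setIntegral_eq_integral_of_forall_compl_eq_zero (fun x hx => by simp [hu0 x hx, hp0.ne']),
    setIntegral_eq_integral_of_forall_compl_eq_zero (fun x hx => by simp [hg0 x hx]),
    setIntegral_eq_integral_of_forall_compl_eq_zero (fun x hx => by simp [hu0 x hx])]
  obtain ⟨hQ, hI⟩ := mainBound hu1 hsupp hp hν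
  have I0 : 0 ≤ ∫ x, |u x| ^ p := integral_nonneg fun x => Real.rpow_nonneg (abs_nonneg _) _
  have A0 : 0 ≤ ∫ x, ‖gradient u x‖ ^ 2 := integral_nonneg fun x => sq_nonneg _
  have B0 : 0 ≤ ∫ x, u x ^ 2 := integral_nonneg fun x => sq_nonneg _
  set c : ℝ := volume.real Ω / 8 + 1 with hc
  have c0 : 0 < c := by positivity
  have low : ∀ r ∈ RayleighSet 2 Ω, 1 / c ≤ r := by
    rintro r ⟨v, hv, hvs, hvsub, hv0, rfl⟩
    have P := poincare hΩb (hv.of_le (by exact_mod_cast le_top)) hvs hvsub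
    have vA0 : 0 ≤ ∫ x, ‖gradient v x‖ ^ 2 := integral_nonneg fun x => sq_nonneg _
    have vB0 : 0 < ∫ x, v x ^ 2 := lt_of_le_of_ne (integral_nonneg fun x => sq_nonneg _) (Ne.symm hv0)
    rw [div_le_div_iff₀ c0 vB0, hc]
    linarith
  have l0 : 0 ≤ lam1 2 Ω := Real.sInf_nonneg fun r hr => le_trans (by positivity) (low r hr)
  have q0 : 0 ≤ p / 2 := by linarith
  rcases B0.eq_or_lt with hB | hB
  · rw [← hB, mul_zero, mul_zero] at hI
    rw [le_antisymm hI I0, Real.zero_rpow (by positivity)]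
    have : 0 ≤ lam1 2 Ω + p / 2 * τ := by positivity
    positivity
  have mem : (∫ x, ‖gradient u x‖ ^ 2) / (∫ x, u x ^ 2) ∈ RayleighSet 2 Ω :=
    ⟨u, hu, hsupp, hsub, hB.ne', rfl⟩
  have lpos : 0 < lam1 2 Ω := lt_of_lt_of_le (by positivity) (le_csInf ⟨_, mem⟩ low)
  have lA : lam1 2 Ω * (∫ x, u x ^ 2) ≤ ∫ x, ‖gradient u x‖ ^ 2 := by
    rw [← le_div_iff₀ hB]
    exact csInf_le ⟨1 / c, low⟩ mem
  have hA : 0 < ∫ x, ‖gradient u x‖ ^ 2 := lt_of_lt_of_le (by positivity) lA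
  have Bn := bern hA B0 (q := p / 2) (by linarith) hτ lA
  have L0 : 0 < lam1 2 Ω + p / 2 * τ := by positivity
  generalize (∏ i ∈ Finset.range (ν - 1), (p/2 - (i : ℝ))) = Q at *
  generalize lam1 2 Ω + p / 2 * τ = L at *
  generalize (∫ x, ‖gradient u x‖ ^ 2) = A at *
  generalize (∫ x, u x ^ 2) = B at *
  rw [← le_div_iff₀ L0] at Bn
  have V0 : 0 ≤ A + τ * B := by positivity
  have F := hI.trans (mul_le_mul_of_nonneg_left Bn (by positivity))
  refine (Real.rpow_le_rpow I0 F (by positivity)).trans (le_of_eq ?_)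
  rw [Real.mul_rpow (by positivity) (by positivity), Real.mul_rpow (by positivity) (by positivity),
    Real.div_rpow (by positivity) L0.le, ← Real.rpow_natCast Q, ← Real.rpow_mul (by norm_num),
    ← Real.rpow_mul hQ, ← Real.rpow_mul V0, Real.sqrt_eq_rpow, neg_div, Real.rpow_neg L0.le,
    show (p / 2 + (2 * (ν : ℝ) - 3)) * (1 / p) = 1 / 2 + (2 * (ν : ℝ) - 3) / p by field_simp,
    show ((2 : ℕ) : ℝ) * (1 / p) = 2 / p by push_cast; ring,
    show p / 2 * (1 / p) = 1 / 2 by field_simp]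
  ring

end
end

section
/- Let n ≥ 3, p ∈ [2, 2n/(n−2)], s := n(1/p − 1/2 + 1/n) ∈ [0,1], τ ≥ 0, and Ω ⊂ ℝⁿ a bounded domain with first Dirichlet Laplacian eigenvalue λ₁. Then for all u ∈ H₀¹(Ω), ‖u‖_{L^p(Ω)} ≤ ((n−1)/(√n(n−2)))^{1−s} (s/(sλ₁ + τ))^{s/2} ‖u‖_V, where ‖u‖_V² = ‖∇u‖²_{L²} + τ‖u‖²_{L²}. -/
open MeasureTheory

noncomputable section

open Set Function Finset MeasureTheory.Measure in
open scoped ENNReal NNReal in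
/-- Loomis-Whitney / grid-lines lemma with distinct functions. -/
theorem plum_lw {ι : Type*} [Fintype ι] [DecidableEq ι] {A : ι → Type*} [∀ i, MeasurableSpace (A i)]
    (μ : ∀ i, Measure (A i)) [∀ i, SigmaFinite (μ i)] {p : ℝ} (hp₀ : 0 ≤ p)
    (hp : ((Fintype.card ι : ℝ) - 1) * p = 1) {f : ι → (∀ i, A i) → ℝ≥0∞}
    (hf : ∀ i, Measurable (f i)) (s : Finset ι) (x : ∀ i, A i) :
    (∫⋯∫⁻_s, (fun x => ∏ i, ((∫⋯∫⁻_{i}, f i ∂μ) x) ^ p) ∂μ) x ≤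
      ∏ i, ((∫⋯∫⁻_(insert i s), f i ∂μ) x) ^ p := by
  have hG : Measurable (fun x => ∏ i, ((∫⋯∫⁻_{i}, f i ∂μ) x) ^ p) :=
    Finset.measurable_fun_prod _ fun i _ => ((hf i).lmarginal μ).pow_const _
  induction s using Finset.induction generalizing x with
  | empty => simp
  | insert k s hk ih =>
    rw [lmarginal_insert _ hG hk]
    have hm : ∀ i, Measurable fun t => (∫⋯∫⁻_(insert i s), f i ∂μ) (update x k t) :=
      fun i => ((hf i).lmarginal μ).comp (measurable_update _)
    have hc : ∀ t, (∫⋯∫⁻_(insert k s), f k ∂μ) (update x k t) = (∫⋯∫⁻_(insert k s), f k ∂μ) x := by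
      intro t
      exact lmarginal_update_of_mem _ (Finset.mem_insert_self k s) _ _ _
    calc ∫⁻ t, (∫⋯∫⁻_s, (fun x => ∏ i, ((∫⋯∫⁻_{i}, f i ∂μ) x) ^ p) ∂μ) (update x k t) ∂μ k
        ≤ ∫⁻ t, ∏ i, ((∫⋯∫⁻_(insert i s), f i ∂μ) (update x k t)) ^ p ∂μ k :=
          lintegral_mono fun t => ih _
      _ = ∫⁻ t, ((∫⋯∫⁻_(insert k s), f k ∂μ) x) ^ p *
            ∏ i ∈ univ.erase k, ((∫⋯∫⁻_(insert i s), f i ∂μ) (update x k t)) ^ p ∂μ k := by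
          congr! 2 with t
          rw [← Finset.mul_prod_erase _ _ (Finset.mem_univ k), hc]
      _ = ((∫⋯∫⁻_(insert k s), f k ∂μ) x) ^ p *
            ∫⁻ t, ∏ i ∈ univ.erase k, ((∫⋯∫⁻_(insert i s), f i ∂μ) (update x k t)) ^ p ∂μ k := by
          rw [lintegral_const_mul]
          exact Finset.measurable_fun_prod _ fun i _ => (hm i).pow_const _
      _ ≤ ((∫⋯∫⁻_(insert k s), f k ∂μ) x) ^ p *
            ∏ i ∈ univ.erase k, (∫⁻ t, (∫⋯∫⁻_(insert i s), f i ∂μ) (update x k t) ∂μ k) ^ p := by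
          gcongr
          apply ENNReal.lintegral_prod_norm_pow_le
          · exact fun i _ => (hm i).aemeasurable
          · rw [Finset.sum_const, Finset.card_erase_of_mem (Finset.mem_univ k), nsmul_eq_mul,
              Nat.cast_sub, Finset.card_univ]
            · simpa using hp
            · exact Finset.card_pos.2 ⟨k, Finset.mem_univ k⟩
          · exact fun _ _ => hp₀
      _ = ∏ i, ((∫⋯∫⁻_(insert i (insert k s)), f i ∂μ) x) ^ p := by
          rw [← Finset.mul_prod_erase univ _ (Finset.mem_univ k), Finset.insert_idem]
          congr 1
          refine Finset.prod_congr rfl fun i hi => ?_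
          have hik : i ≠ k := Finset.ne_of_mem_erase hi
          have : k ∉ insert i s := by simp [hk, hik.symm]
          rw [Finset.insert_comm, lmarginal_insert _ (hf i) this]

open Set Function Finset MeasureTheory.Measure in
open scoped ENNReal NNReal in
theorem plum_half {f : ℝ → ℝ} (hf : ContDiff ℝ 1 f) (h'f : HasCompactSupport f) (x : ℝ) :
    ‖f x‖ₑ ≤ 2⁻¹ * ∫⁻ y, ‖deriv f y‖ₑ := by
  have h1 := HasCompactSupport.enorm_le_lintegral_Ici_deriv hf h'f x
  have h2 : ‖f x‖ₑ ≤ ∫⁻ y in Ioi x, ‖deriv f y‖ₑ := by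
    have := HasCompactSupport.integral_Ioi_deriv_eq hf h'f x
    rw [← enorm_neg, ← this]
    exact enorm_integral_le_lintegral_enorm _
  have h3 : 2 * ‖f x‖ₑ ≤ ∫⁻ y, ‖deriv f y‖ₑ := by
    rw [two_mul, ← lintegral_add_compl _ (measurableSet_Iic (a := x)), compl_Iic]
    exact add_le_add h1 h2
  calc ‖f x‖ₑ = 2⁻¹ * (2 * ‖f x‖ₑ) := by
        rw [← mul_assoc, ENNReal.inv_mul_cancel (by simp) (by simp), one_mul]
    _ ≤ _ := by gcongr

open Set Function Finset MeasureTheory.Measure in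
open scoped ENNReal NNReal in
theorem plum_pi {n : ℕ} (hn : 2 ≤ n) {u : (Fin n → ℝ) → ℝ} (hu : ContDiff ℝ 1 u)
    (h2u : HasCompactSupport u) :
    ∫⁻ x, ‖u x‖ₑ ^ ((n : ℝ) / (n - 1)) ≤
      ∏ i : Fin n, (2⁻¹ * ∫⁻ x, ‖fderiv ℝ u x (Pi.single i 1)‖ₑ) ^ (1 / ((n : ℝ) - 1)) := by
  have hn' : (1 : ℝ) ≤ n - 1 := by
    have : (2 : ℝ) ≤ n := by exact_mod_cast hn
    linarith
  have hp0 : 0 ≤ 1 / ((n : ℝ) - 1) := by positivity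
  let f : Fin n → (Fin n → ℝ) → ℝ≥0∞ := fun i x => 2⁻¹ * ‖fderiv ℝ u x (Pi.single i 1)‖ₑ
  have hfm : ∀ i, Measurable fun x => ‖fderiv ℝ u x (Pi.single i 1)‖ₑ := by
    intro i
    have : Continuous fun x => fderiv ℝ u x (Pi.single i 1) :=
      (hu.continuous_fderiv (by simp)).clm_apply continuous_const
    exact this.measurable.enorm
  have hf : ∀ i, Measurable (f i) := fun i => (hfm i).const_mul _
  have key := plum_lw (fun _ : Fin n => (volume : Measure ℝ)) hp0 (by
    rw [Fintype.card_fin]; field_simp) hf univ 0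
  calc ∫⁻ x, ‖u x‖ₑ ^ ((n : ℝ) / (n - 1))
      = ∫⁻ x, ∏ _i : Fin n, ‖u x‖ₑ ^ (1 / ((n : ℝ) - 1)) := by
        congr! 2 with x
        rw [prod_const, Finset.card_univ, Fintype.card_fin, ← ENNReal.rpow_mul_natCast]
        congr 1
        ring
    _ ≤ ∫⁻ x, ∏ i : Fin n, ((∫⋯∫⁻_{i}, f i ∂(fun _ : Fin n => (volume : Measure ℝ))) x) ^
          (1 / ((n : ℝ) - 1)) := by
        gcongr with x i
        rw [lmarginal_singleton]
        simp only [f]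
        have hm' : Measurable fun t => ‖fderiv ℝ u (update x i t) (Pi.single i 1)‖ₑ :=
          (hfm i).comp (measurable_update _)
        rw [lintegral_const_mul _ hm']
        have := plum_half (f := u ∘ update x i) (hu.comp (by convert! contDiff_update 1 x i))
          (h2u.comp_isClosedEmbedding (isClosedEmbedding_update x i)) (x i)
        simp only [comp_apply, update_eq_self] at this
        refine this.trans (le_of_eq ?_)
        congr 1
        refine lintegral_congr fun y => ?_
        rw [fderiv_comp_deriv _ (hu.differentiable one_ne_zero).differentiableAt
          (hasDerivAt_update x i y).differentiableAt, deriv_update]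
    _ ≤ _ := by
        rw [lmarginal_univ] at key
        refine key.trans (le_of_eq ?_)
        refine prod_congr rfl fun i _ => ?_
        rw [Finset.insert_eq_of_mem (Finset.mem_univ i), lmarginal_univ]
        simp only [f]
        rw [lintegral_const_mul _ (hfm i)]
        rfl

open scoped ENNReal NNReal in
theorem plum_amgm {n : ℕ} (hn : 1 ≤ n) (a : Fin n → ℝ≥0∞) :
    ∏ i, a i ^ (1 / (n : ℝ)) ≤ ENNReal.ofReal (1 / n) * ∑ i, a i := by
  have hn0 : (0 : ℝ) < n := by exact_mod_cast hn
  by_cases h : ∃ i, a i = ⊤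
  · obtain ⟨i, hi⟩ := h
    have : ∑ i, a i = ⊤ := by
      rw [ENNReal.sum_eq_top]
      exact ⟨i, Finset.mem_univ i, hi⟩
    rw [this, ENNReal.mul_top]
    · exact le_top
    · simpa using Nat.pos_iff_ne_zero.1 hn
  · push Not at h
    lift a to Fin n → ℝ≥0 using h
    have := NNReal.geom_mean_le_arith_mean_weighted Finset.univ
      (fun _ : Fin n => (1 / (n : ℝ≥0))) a (by
        have : (n : ℝ≥0) ≠ 0 := by exact_mod_cast hn0.ne'
        simp [this])
    have h1 : ENNReal.ofReal (1 / n) = ((1 / (n : ℝ≥0) : ℝ≥0) : ℝ≥0∞) := by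
      rw [ENNReal.ofReal]
      congr 1
      ext
      rw [Real.coe_toNNReal _ (by positivity)]
      simp
    rw [← Finset.mul_sum] at this
    rw [h1]
    have h2 := ENNReal.coe_le_coe.2 this
    push_cast at h2
    refine le_trans (le_of_eq ?_) (h2.trans (le_of_eq ?_))
    · refine Finset.prod_congr rfl fun i _ => ?_
      rw [ENNReal.coe_rpow_of_nonneg]
      positivity
    · push_cast
      rfl

theorem plum_sum_le {n : ℕ} (L : EuclideanSpace ℝ (Fin n) →L[ℝ] ℝ) :
    ∑ i, ‖L (EuclideanSpace.single i 1)‖ ≤ Real.sqrt n * ‖L‖ := by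
  let y : EuclideanSpace ℝ (Fin n) :=
    ∑ i, ((SignType.sign (L (EuclideanSpace.single i 1)) : ℝ)) • EuclideanSpace.single i (1 : ℝ)
  have hy : ∀ i, y i = (SignType.sign (L (EuclideanSpace.single i 1)) : ℝ) := by
    intro i
    simp [y, Finset.sum_apply, Pi.single_apply]
  have h1 : L y = ∑ i, ‖L (EuclideanSpace.single i 1)‖ := by
    simp only [y, map_sum, map_smul, smul_eq_mul]
    refine Finset.sum_congr rfl fun i _ => ?_
    rw [sign_mul_self, Real.norm_eq_abs]
  have h2 : ‖y‖ ≤ Real.sqrt n := by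
    rw [EuclideanSpace.norm_eq]
    apply Real.sqrt_le_sqrt
    calc ∑ i, ‖y i‖ ^ 2 ≤ ∑ i : Fin n, (1 : ℝ) := by
          refine Finset.sum_le_sum fun i _ => ?_
          rw [hy]
          rcases lt_trichotomy (L (EuclideanSpace.single i 1)) 0 with h | h | h <;> simp [h]
      _ = n := by simp
  calc _ = L y := h1.symm
    _ ≤ ‖L y‖ := le_abs_self _
    _ ≤ ‖L‖ * ‖y‖ := L.le_opNorm y
    _ ≤ ‖L‖ * Real.sqrt n := by gcongr
    _ = _ := mul_comm _ _

open scoped ENNReal NNReal in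
theorem plum_W11 {n : ℕ} (hn : 2 ≤ n) {v : EuclideanSpace ℝ (Fin n) → ℝ} (hv : ContDiff ℝ 1 v)
    (h2v : HasCompactSupport v) :
    (∫⁻ x, ‖v x‖ₑ ^ ((n : ℝ) / (n - 1))) ^ (((n : ℝ) - 1) / n) ≤
      ENNReal.ofReal (1 / (2 * Real.sqrt n)) * ∫⁻ x, ‖fderiv ℝ v x‖ₑ := by
  have hn2 : (2 : ℝ) ≤ n := by exact_mod_cast hn
  have hn' : (1 : ℝ) ≤ n - 1 := by linarith
  let e : (Fin n → ℝ) ≃L[ℝ] EuclideanSpace ℝ (Fin n) := (EuclideanSpace.equiv (Fin n) ℝ).symm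
  have he : MeasurePreserving e := PiLp.volume_preserving_toLp (Fin n)
  have hdc : Continuous (fderiv ℝ v) := hv.continuous_fderiv (by simp)
  have hdm : ∀ i : Fin n, Measurable fun x => ‖fderiv ℝ v x (EuclideanSpace.single i 1)‖ₑ := by
    intro i
    have : Continuous fun x => fderiv ℝ v x (EuclideanSpace.single i 1) :=
      hdc.clm_apply continuous_const
    exact this.measurable.enorm
  have hw : ContDiff ℝ 1 (v ∘ e) := hv.comp e.contDiff
  have h2w : HasCompactSupport (v ∘ e) := h2v.comp_homeomorph e.toHomeomorph
  have key := plum_pi hn hw h2w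
  have hL : ∫⁻ x, ‖(v ∘ e) x‖ₑ ^ ((n : ℝ) / (n - 1)) = ∫⁻ x, ‖v x‖ₑ ^ ((n : ℝ) / (n - 1)) :=
    he.lintegral_comp (f := fun x => ‖v x‖ₑ ^ ((n : ℝ) / (n - 1)))
      (hv.continuous.measurable.enorm.pow_const _)
  have hR : ∀ i : Fin n, ∫⁻ x, ‖fderiv ℝ (v ∘ e) x (Pi.single i 1)‖ₑ =
      ∫⁻ x, ‖fderiv ℝ v x (EuclideanSpace.single i 1)‖ₑ := by
    intro i
    rw [← he.lintegral_comp (hdm i)]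
    congr! 2 with x
    rw [fderiv_comp _ (hv.differentiable one_ne_zero _) e.differentiableAt, e.fderiv]
    rfl
  rw [hL] at key
  simp only [hR] at key
  calc (∫⁻ x, ‖v x‖ₑ ^ ((n : ℝ) / (n - 1))) ^ (((n : ℝ) - 1) / n)
      ≤ (∏ i : Fin n, (2⁻¹ * ∫⁻ x, ‖fderiv ℝ v x (EuclideanSpace.single i 1)‖ₑ) ^
          (1 / ((n : ℝ) - 1))) ^ (((n : ℝ) - 1) / n) := by
        apply ENNReal.rpow_le_rpow key
        positivity
    _ = ∏ i : Fin n, (2⁻¹ * ∫⁻ x, ‖fderiv ℝ v x (EuclideanSpace.single i 1)‖ₑ) ^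
          (1 / (n : ℝ)) := by
        rw [← ENNReal.prod_rpow_of_nonneg (by positivity)]
        refine Finset.prod_congr rfl fun i _ => ?_
        rw [← ENNReal.rpow_mul]
        congr 1
        field_simp
    _ ≤ ENNReal.ofReal (1 / n) *
          ∑ i : Fin n, (2⁻¹ * ∫⁻ x, ‖fderiv ℝ v x (EuclideanSpace.single i 1)‖ₑ) :=
        plum_amgm (by omega) _
    _ = ENNReal.ofReal (1 / n) * 2⁻¹ *
          ∫⁻ x, ∑ i : Fin n, ‖fderiv ℝ v x (EuclideanSpace.single i 1)‖ₑ := by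
        rw [lintegral_finsetSum _ fun i _ => hdm i, ← Finset.mul_sum, mul_assoc]
    _ ≤ ENNReal.ofReal (1 / n) * 2⁻¹ *
          ∫⁻ x, ENNReal.ofReal (Real.sqrt n) * ‖fderiv ℝ v x‖ₑ := by
        gcongr with x
        have := ENNReal.ofReal_le_ofReal (plum_sum_le (fderiv ℝ v x))
        rw [ENNReal.ofReal_sum_of_nonneg (fun _ _ => norm_nonneg _),
          ENNReal.ofReal_mul (Real.sqrt_nonneg _)] at this
        simpa only [ofReal_norm] using this
    _ = _ := by
        rw [lintegral_const_mul _ hdc.measurable.enorm, ← mul_assoc]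
        congr 1
        have : (2⁻¹ : ℝ≥0∞) = ENNReal.ofReal (2⁻¹) := by
          rw [ENNReal.ofReal_inv_of_pos (by norm_num)]; simp
        rw [this, ← ENNReal.ofReal_mul (by positivity), ← ENNReal.ofReal_mul (by positivity)]
        congr 1
        have h0 : (0 : ℝ) < n := by linarith
        have h1 : Real.sqrt n * Real.sqrt n = n := Real.mul_self_sqrt h0.le
        have h2 : 0 < Real.sqrt n := Real.sqrt_pos.2 h0
        rw [eq_comm]
        field_simp
        nlinarith

open scoped ENNReal NNReal in
theorem plum_sobolev {n : ℕ} (hn : 3 ≤ n) {u : EuclideanSpace ℝ (Fin n) → ℝ}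
    (hu : ContDiff ℝ 1 u) (h2u : HasCompactSupport u) :
    (∫⁻ x, ‖u x‖ₑ ^ (2 * (n : ℝ) / (n - 2))) ^ (((n : ℝ) - 2) / (2 * n)) ≤
      ENNReal.ofReal (((n : ℝ) - 1) / (Real.sqrt n * ((n : ℝ) - 2))) *
        (∫⁻ x, ‖fderiv ℝ u x‖ₑ ^ (2 : ℝ)) ^ (1 / (2 : ℝ)) := by
  have hn3 : (3 : ℝ) ≤ n := by exact_mod_cast hn
  have hn2 : (0 : ℝ) < n - 2 := by linarith
  have hn1 : (0 : ℝ) < n - 1 := by linarith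
  have hn0 : (0 : ℝ) < n := by linarith
  set r : ℝ := 2 * (n : ℝ) / (n - 2) with hr
  have hr0 : 0 < r := by positivity
  set γ : ℝ := 2 * ((n : ℝ) - 1) / (n - 2) with hγ
  have h1γ : 1 < γ := by
    rw [hγ, one_lt_div hn2]; linarith
  by_cases h3u : ∫⁻ x, ‖u x‖ₑ ^ r = 0
  · rw [h3u, ENNReal.zero_rpow_of_pos (by positivity)]
    exact zero_le
  have h4u : ∫⁻ x, ‖u x‖ₑ ^ r ≠ ∞ := by
    refine lintegral_rpow_enorm_lt_top_of_eLpNorm'_lt_top hr0 ?_ |>.ne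
    have := hu.continuous.memLp_of_hasCompactSupport (μ := volume) (p := ENNReal.ofReal r) h2u
      |>.eLpNorm_lt_top
    rwa [eLpNorm_eq_eLpNorm' (by simpa using hr0) (by simp), ENNReal.toReal_ofReal hr0.le] at this
  have h5u : (∫⁻ x, ‖u x‖ₑ ^ r) ^ (1 / (2 : ℝ)) ≠ 0 :=
    ENNReal.rpow_pos (pos_iff_ne_zero.mpr h3u) h4u |>.ne'
  have h6u : (∫⁻ x, ‖u x‖ₑ ^ r) ^ (1 / (2 : ℝ)) ≠ ∞ := by finiteness
  have h7u := hu.continuous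
  have h8u : Continuous (fderiv ℝ u) := hu.continuous_fderiv (by simp)
  let v : EuclideanSpace ℝ (Fin n) → ℝ := fun x ↦ ‖u x‖ ^ γ
  have hv : ContDiff ℝ 1 v := hu.norm_rpow h1γ
  have h2v : HasCompactSupport v := h2u.norm.rpow_const (by linarith)
  set C := ENNReal.ofReal (1 / (2 * Real.sqrt n)) with hC
  have hm1 : Measurable fun x => ‖u x‖ₑ ^ (γ - 1) := h7u.measurable.enorm.pow_const _
  have hm2 : Measurable fun x => ‖fderiv ℝ u x‖ₑ := h8u.measurable.enorm
  have main :=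
  calc (∫⁻ x, ‖u x‖ₑ ^ r) ^ (((n : ℝ) - 1) / n)
      = (∫⁻ x, ‖v x‖ₑ ^ ((n : ℝ) / (n - 1))) ^ (((n : ℝ) - 1) / n) := by
        congr! 3 with x
        simp only [v]
        rw [Real.enorm_rpow_of_nonneg (norm_nonneg _) (by linarith), enorm_norm,
          ← ENNReal.rpow_mul]
        congr 1
        rw [hr, hγ]
        field_simp
    _ ≤ C * ∫⁻ x, ‖fderiv ℝ v x‖ₑ := plum_W11 (by omega) hv h2v
    _ ≤ C * ∫⁻ x, ENNReal.ofReal γ * (‖u x‖ₑ ^ (γ - 1) * ‖fderiv ℝ u x‖ₑ) := by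
        gcongr with x
        have := enorm_fderiv_norm_rpow_le (x := x) (hu.differentiable one_ne_zero)
          (p := ⟨γ, by linarith⟩) h1γ
        rw [mul_assoc] at this
        refine this.trans (le_of_eq ?_)
        congr 1
        rw [ENNReal.ofReal]
        congr 1
        ext
        rw [Real.coe_toNNReal _ (by linarith)]
        rfl
    _ = C * ENNReal.ofReal γ * ∫⁻ x, ‖u x‖ₑ ^ (γ - 1) * ‖fderiv ℝ u x‖ₑ := by
        have hm3 : Measurable fun x => ‖u x‖ₑ ^ (γ - 1) * ‖fderiv ℝ u x‖ₑ := hm1.mul hm2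
        rw [lintegral_const_mul _ hm3, mul_assoc]
    _ ≤ C * ENNReal.ofReal γ * ((∫⁻ x, ‖u x‖ₑ ^ r) ^ (1 / (2 : ℝ)) *
          (∫⁻ x, ‖fderiv ℝ u x‖ₑ ^ (2 : ℝ)) ^ (1 / (2 : ℝ))) := by
        gcongr
        have := ENNReal.lintegral_mul_le_Lp_mul_Lq volume
          (Real.HolderConjugate.two_two) hm1.aemeasurable hm2.aemeasurable
        refine this.trans (le_of_eq ?_)
        congr! 4 with x
        rw [← ENNReal.rpow_mul]
        congr 1
        rw [hr, hγ]
        field_simp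
        ring
    _ = C * ENNReal.ofReal γ * (∫⁻ x, ‖fderiv ℝ u x‖ₑ ^ (2 : ℝ)) ^ (1 / (2 : ℝ)) *
          (∫⁻ x, ‖u x‖ₑ ^ r) ^ (1 / (2 : ℝ)) := by ring
  have hexp : ((n : ℝ) - 2) / (2 * n) = ((n : ℝ) - 1) / n - 1 / 2 := by
    field_simp
    ring
  rw [hexp, ENNReal.rpow_sub _ _ h3u h4u, ENNReal.div_le_iff h5u h6u]
  refine main.trans (le_of_eq ?_)
  congr 2
  rw [hC, ← ENNReal.ofReal_mul (by positivity)]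
  congr 1
  have h2 : 0 < Real.sqrt n := Real.sqrt_pos.2 hn0
  rw [hγ]
  field_simp

open scoped ENNReal NNReal in
/-- Conversion of lower integrals of powers into Bochner integrals. -/
theorem plum_conv {n : ℕ} {F : Type*} [NormedAddCommGroup F]
    {g : EuclideanSpace ℝ (Fin n) → F} (hg : Continuous g)
    (h2g : HasCompactSupport g) {q : ℝ} (hq : 0 < q) :
    ∫⁻ x, ‖g x‖ₑ ^ q = ENNReal.ofReal (∫ x, ‖g x‖ ^ q) := by
  have hc : Continuous fun x => ‖g x‖ ^ q := hg.norm.rpow_const fun _ => Or.inr hq.le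
  have hs : HasCompactSupport fun x => ‖g x‖ ^ q := h2g.norm.rpow_const hq.ne'
  rw [ofReal_integral_eq_lintegral_ofReal (hc.integrable_of_hasCompactSupport hs)
    (Filter.Eventually.of_forall fun x => by positivity)]
  refine lintegral_congr fun x => ?_
  rw [← ENNReal.ofReal_rpow_of_nonneg (norm_nonneg _) hq.le, ofReal_norm]

theorem plum_norm_gradient {n : ℕ} (u : EuclideanSpace ℝ (Fin n) → ℝ)
    (x : EuclideanSpace ℝ (Fin n)) : ‖gradient u x‖ = ‖fderiv ℝ u x‖ := by
  rw [gradient, LinearIsometryEquiv.norm_map]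

open scoped ENNReal NNReal in
theorem plum_sobolev_real {n : ℕ} (hn : 3 ≤ n) {u : EuclideanSpace ℝ (Fin n) → ℝ}
    (hu : ContDiff ℝ 1 u) (h2u : HasCompactSupport u) :
    (∫ x, ‖u x‖ ^ (2 * (n : ℝ) / (n - 2))) ^ (((n : ℝ) - 2) / (2 * n)) ≤
      (((n : ℝ) - 1) / (Real.sqrt n * ((n : ℝ) - 2))) *
        (∫ x, ‖gradient u x‖ ^ 2) ^ (1 / (2 : ℝ)) := by
  have hn3 : (3 : ℝ) ≤ n := by exact_mod_cast hn
  have hn2 : (0 : ℝ) < n - 2 := by linarith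
  have hn1 : (0 : ℝ) < n - 1 := by linarith
  have hn0 : (0 : ℝ) < n := by linarith
  have h := plum_sobolev hn hu h2u
  have hA : ∫ x, ‖fderiv ℝ u x‖ ^ (2 : ℝ) = ∫ x, ‖gradient u x‖ ^ 2 := by
    refine integral_congr_ae (Filter.Eventually.of_forall fun x => ?_)
    simp only [plum_norm_gradient]
    norm_cast
  have hA0 : 0 ≤ ∫ x, ‖gradient u x‖ ^ 2 := integral_nonneg fun x => by positivity
  have hN0 : 0 ≤ ∫ x, ‖u x‖ ^ (2 * (n : ℝ) / (n - 2)) := integral_nonneg fun x => by positivity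
  rw [plum_conv hu.continuous h2u (by positivity),
    plum_conv (hu.continuous_fderiv (by simp)) (h2u.fderiv ℝ) (by norm_num), hA,
    ENNReal.ofReal_rpow_of_nonneg hN0 (by positivity),
    ENNReal.ofReal_rpow_of_nonneg hA0 (by positivity), ← ENNReal.ofReal_mul (by positivity),
    ENNReal.ofReal_le_ofReal_iff (by positivity)] at h
  exact h

open scoped ENNReal NNReal in
theorem plum_interp {n : ℕ} {u : EuclideanSpace ℝ (Fin n) → ℝ}
    (hu : Continuous u) (h2u : HasCompactSupport u) {p r a b : ℝ} (hp : 0 < p) (hr : 0 < r)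
    (ha : 0 ≤ a) (hb : 0 ≤ b) (hab : a + b = 1) (hpr : 2 * a + r * b = p) :
    ∫ x, ‖u x‖ ^ p ≤ (∫ x, (u x) ^ 2) ^ a * (∫ x, ‖u x‖ ^ r) ^ b := by
  have hB0 : 0 ≤ ∫ x, (u x) ^ 2 := integral_nonneg fun x => by positivity
  have hN0 : 0 ≤ ∫ x, ‖u x‖ ^ r := integral_nonneg fun x => by positivity
  have hB : ∫ x, ‖u x‖ ^ (2 : ℝ) = ∫ x, (u x) ^ 2 := by
    refine integral_congr_ae (Filter.Eventually.of_forall fun x => ?_)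
    simp
  have h := ENNReal.lintegral_mul_norm_pow_le (μ := volume)
    (f := fun x => ‖u x‖ₑ ^ (2 : ℝ)) (g := fun x => ‖u x‖ₑ ^ r)
    (hu.measurable.enorm.pow_const _).aemeasurable (hu.measurable.enorm.pow_const _).aemeasurable
    ha hb hab
  have h1 : ∫⁻ x, (‖u x‖ₑ ^ (2 : ℝ)) ^ a * (‖u x‖ₑ ^ r) ^ b = ∫⁻ x, ‖u x‖ₑ ^ p := by
    refine lintegral_congr fun x => ?_
    rw [← ENNReal.rpow_mul, ← ENNReal.rpow_mul,
      ← ENNReal.rpow_add_of_nonneg _ _ (by positivity) (by positivity), hpr]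
  rw [h1, plum_conv hu h2u hp, plum_conv hu h2u hr, plum_conv hu h2u (by norm_num), hB,
    ENNReal.ofReal_rpow_of_nonneg hB0 ha, ENNReal.ofReal_rpow_of_nonneg hN0 hb,
    ← ENNReal.ofReal_mul (by positivity), ENNReal.ofReal_le_ofReal_iff (by positivity)] at h
  exact h

open scoped ENNReal NNReal in
theorem plum_poincare {n : ℕ} (hn : 3 ≤ n) {Ω : Set (EuclideanSpace ℝ (Fin n))}
    (hΩb : Bornology.IsBounded Ω) : ∃ C : ℝ, 0 < C ∧
    ∀ u : EuclideanSpace ℝ (Fin n) → ℝ, ContDiff ℝ 1 u → HasCompactSupport u →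
      tsupport u ⊆ Ω → (∫ x, (u x) ^ 2) ≤ C * ∫ x, ‖gradient u x‖ ^ 2 := by
  let c : ℝ≥0 := eLpNormLESNormFDerivOfLeConst ℝ
    (volume : Measure (EuclideanSpace ℝ (Fin n))) Ω 2 2
  refine ⟨(c : ℝ) ^ 2 + 1, by positivity, fun u hu h2u hsub => ?_⟩
  have h := eLpNorm_le_eLpNorm_fderiv (volume : Measure (EuclideanSpace ℝ (Fin n))) hu
    ((subset_tsupport u).trans hsub) (p := 2) (by norm_num)
    (by rw [finrank_euclideanSpace_fin]; exact_mod_cast hn) hΩb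
  rw [eLpNorm_nnreal_eq_lintegral (by norm_num), eLpNorm_nnreal_eq_lintegral (by norm_num)] at h
  have hB0 : 0 ≤ ∫ x, (u x) ^ 2 := integral_nonneg fun x => by positivity
  have hA0 : 0 ≤ ∫ x, ‖gradient u x‖ ^ 2 := integral_nonneg fun x => by positivity
  have hB : ∫ x, ‖u x‖ ^ (2 : ℝ) = ∫ x, (u x) ^ 2 := by
    refine integral_congr_ae (Filter.Eventually.of_forall fun x => ?_)
    simp
  have hA : ∫ x, ‖fderiv ℝ u x‖ ^ (2 : ℝ) = ∫ x, ‖gradient u x‖ ^ 2 := by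
    refine integral_congr_ae (Filter.Eventually.of_forall fun x => ?_)
    simp only [plum_norm_gradient]
    norm_cast
  have h22 : ((2 : ℝ≥0) : ℝ) = 2 := rfl
  rw [h22, plum_conv hu.continuous h2u (by norm_num),
    plum_conv (hu.continuous_fderiv (by simp)) (h2u.fderiv ℝ) (by norm_num), hA, hB,
    ENNReal.ofReal_rpow_of_nonneg hB0 (by positivity),
    ENNReal.ofReal_rpow_of_nonneg hA0 (by positivity), ← ENNReal.ofReal_coe_nnreal,
    ← ENNReal.ofReal_mul (by positivity),
    ENNReal.ofReal_le_ofReal_iff (by positivity), ← Real.sqrt_eq_rpow, ← Real.sqrt_eq_rpow] at h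
  have h3 : (∫ x, (u x) ^ 2) ≤ (c : ℝ) ^ 2 * ∫ x, ‖gradient u x‖ ^ 2 := by
    have := pow_le_pow_left₀ (Real.sqrt_nonneg _) h 2
    rwa [mul_pow, Real.sq_sqrt hB0, Real.sq_sqrt hA0] at this
  linarith

/-- The final real-number inequality: weighted AM-GM. -/
theorem plum_real {A B lam s τ : ℝ} (hA : 0 ≤ A) (hB : 0 < B) (hlam : 0 < lam) (hs : 0 < s)
    (hs1 : s ≤ 1) (hτ : 0 ≤ τ) (hAB : lam * B ≤ A) :
    B ^ (s / 2) * A ^ ((1 - s) / 2) ≤ (s / (s * lam + τ)) ^ (s / 2) * Real.sqrt (A + τ * B) := by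
  have hD : 0 < s * lam + τ := by positivity
  have h := Real.geom_mean_le_arith_mean2_weighted hs.le (sub_nonneg.2 hs1)
    (p₁ := B * ((s * lam + τ) / s)) (p₂ := A) (by positivity) hA (by ring)
  have h1 : s * (B * ((s * lam + τ) / s)) + (1 - s) * A ≤ A + τ * B := by
    have : s * (B * ((s * lam + τ) / s)) = B * (s * lam + τ) := by field_simp
    rw [this]
    nlinarith
  have h2 : (B * ((s * lam + τ) / s)) ^ (s / 2) * A ^ ((1 - s) / 2) ≤ Real.sqrt (A + τ * B) := by
    apply Real.le_sqrt_of_sq_le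
    refine le_trans (le_of_eq ?_) (h.trans h1)
    rw [mul_pow, ← Real.rpow_natCast, ← Real.rpow_natCast, ← Real.rpow_mul (by positivity),
      ← Real.rpow_mul hA]
    congr 2 <;> (push_cast; ring)
  calc B ^ (s / 2) * A ^ ((1 - s) / 2)
      = (s / (s * lam + τ)) ^ (s / 2) *
          ((B * ((s * lam + τ) / s)) ^ (s / 2) * A ^ ((1 - s) / 2)) := by
        rw [← mul_assoc, ← Real.mul_rpow (by positivity) (by positivity)]
        congr 2
        field_simp
    _ ≤ _ := by gcongr

theorem plum_lam1 {n : ℕ} (hn : 3 ≤ n) {Ω : Set (EuclideanSpace ℝ (Fin n))}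
    (hΩb : Bornology.IsBounded Ω) {u : EuclideanSpace ℝ (Fin n) → ℝ}
    (hu : ContDiff ℝ (⊤ : ℕ∞) u) (hsupp : HasCompactSupport u) (hsub : tsupport u ⊆ Ω)
    (hB : 0 < ∫ x, (u x) ^ 2) :
    0 < lam1 n Ω ∧ lam1 n Ω * (∫ x, (u x) ^ 2) ≤ ∫ x, ‖gradient u x‖ ^ 2 := by
  obtain ⟨C, hC, hP⟩ := plum_poincare hn hΩb
  have hmem : (∫ x, ‖gradient u x‖ ^ 2) / (∫ x, (u x) ^ 2) ∈ RayleighSet n Ω :=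
    ⟨u, hu, hsupp, hsub, hB.ne', rfl⟩
  have hlow : ∀ r ∈ RayleighSet n Ω, C⁻¹ ≤ r := by
    rintro r ⟨w, hw, hws, hwsub, hw0, rfl⟩
    have hw1 : 0 < ∫ x, (w x) ^ 2 :=
      lt_of_le_of_ne (integral_nonneg fun x => by positivity) hw0.symm
    rw [le_div_iff₀ hw1, inv_mul_le_iff₀ hC]
    exact hP w (hw.of_le (by exact_mod_cast le_top)) hws hwsub
  constructor
  · exact lt_of_lt_of_le (inv_pos.2 hC) (le_csInf ⟨_, hmem⟩ hlow)
  · rw [← le_div_iff₀ hB]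
    exact csInf_le ⟨_, hlow⟩ hmem

theorem stmt15 {n : ℕ} (hn : 3 ≤ n) (Ω : Set (EuclideanSpace ℝ (Fin n)))
    (hΩo : IsOpen Ω) (hΩc : IsConnected Ω) (hΩb : Bornology.IsBounded Ω)
    (p : ℝ) (hp : p ∈ Set.Icc (2 : ℝ) (2 * (n : ℝ) / ((n : ℝ) - 2)))
    (s : ℝ) (hs : s = (n : ℝ) * (1/p - 1/2 + 1/(n : ℝ))) (hs01 : s ∈ Set.Icc (0:ℝ) 1)
    (τ : ℝ) (hτ : 0 ≤ τ)
    (u : EuclideanSpace ℝ (Fin n) → ℝ)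
    (hu : ContDiff ℝ (⊤ : ℕ∞) u) (hsupp : HasCompactSupport u) (hsub : tsupport u ⊆ Ω) :
    (∫ x in Ω, |u x| ^ p) ^ (1/p) ≤
      (((n : ℝ) - 1) / (Real.sqrt n * ((n : ℝ) - 2))) ^ (1 - s) *
        (s / (s * lam1 n Ω + τ)) ^ (s/2) *
        Real.sqrt ((∫ x in Ω, ‖gradient u x‖ ^ 2) + τ * ∫ x in Ω, (u x) ^ 2) := by
  have hn3 : (3 : ℝ) ≤ n := by exact_mod_cast hn
  have hn2 : (0 : ℝ) < n - 2 := by linarith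
  have hn1 : (0 : ℝ) < n - 1 := by linarith
  have hn0 : (0 : ℝ) < n := by linarith
  have hp0 : 0 < p := by linarith [hp.1]
  obtain ⟨hs0, hs1⟩ := hs01
  have hu1 : ContDiff ℝ 1 u := hu.of_le (by exact_mod_cast le_top)
  have hz : ∀ x, x ∉ Ω → u x = 0 := fun x hx => image_eq_zero_of_notMem_tsupport fun h => hx (hsub h)
  have hgz : ∀ x, x ∉ Ω → gradient u x = 0 := by
    intro x hx
    have : fderiv ℝ u x = 0 := by
      have h2 : x ∉ tsupport (fderiv ℝ u) := fun h => hx (hsub (tsupport_fderiv_subset ℝ h))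
      exact image_eq_zero_of_notMem_tsupport h2
    rw [← norm_eq_zero, plum_norm_gradient, this, norm_zero]
  rw [setIntegral_eq_integral_of_forall_compl_eq_zero (f := fun x => |u x| ^ p)
      (fun x hx => by simp [hz x hx, hp0.ne']),
    setIntegral_eq_integral_of_forall_compl_eq_zero (f := fun x => ‖gradient u x‖ ^ 2)
      (fun x hx => by simp [hgz x hx]),
    setIntegral_eq_integral_of_forall_compl_eq_zero (f := fun x => (u x) ^ 2)
      (fun x hx => by simp [hz x hx])]
  have hsob := plum_sobolev_real hn hu1 hsupp
  set r : ℝ := 2 * (n : ℝ) / (n - 2) with hr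
  have hr0 : 0 < r := by positivity
  have hri : ((n : ℝ) - 2) / (2 * n) = 1 / r := by rw [hr]; field_simp
  rw [hri] at hsob
  have hps : 1 / p = s / 2 + (1 - s) / r := by
    rw [← mul_one_div (1 - s) r, ← hri, hs]
    field_simp
    ring
  have hint := plum_interp hu1.continuous hsupp (p := p) (r := r) (a := p * s / 2)
    (b := p * (1 - s) / r) hp0 hr0 (by positivity)
    (div_nonneg (mul_nonneg hp0.le (sub_nonneg.2 hs1)) hr0.le)
    (by
      have : p * (1 / p) = 1 := by field_simp
      rw [hps] at this
      linear_combination this)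
    (by field_simp; ring)
  have hB0 : 0 ≤ ∫ x, (u x) ^ 2 := integral_nonneg fun x => by positivity
  have hA0 : 0 ≤ ∫ x, ‖gradient u x‖ ^ 2 := integral_nonneg fun x => by positivity
  have hN0 : 0 ≤ ∫ x, ‖u x‖ ^ r := integral_nonneg fun x => by positivity
  have hP0 : 0 ≤ ∫ x, ‖u x‖ ^ p := integral_nonneg fun x => by positivity
  have hPe : ∫ x, |u x| ^ p = ∫ x, ‖u x‖ ^ p := rfl
  rw [hPe]
  set A := ∫ x, ‖gradient u x‖ ^ 2
  set N := ∫ x, ‖u x‖ ^ r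
  set K := ((n : ℝ) - 1) / (Real.sqrt n * ((n : ℝ) - 2)) with hK
  have hK0 : 0 ≤ K := by positivity
  have hs1' : 0 ≤ 1 - s := sub_nonneg.2 hs1
  have hmain : (∫ x, ‖u x‖ ^ p) ^ (1 / p) ≤
      K ^ (1 - s) * ((∫ x, (u x) ^ 2) ^ (s / 2) * A ^ ((1 - s) / 2)) := by
    calc (∫ x, ‖u x‖ ^ p) ^ (1 / p)
        ≤ ((∫ x, (u x) ^ 2) ^ (p * s / 2) * N ^ (p * (1 - s) / r)) ^ (1 / p) :=
          Real.rpow_le_rpow hP0 hint (by positivity)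
      _ = (∫ x, (u x) ^ 2) ^ (s / 2) * (N ^ (1 / r)) ^ (1 - s) := by
          rw [Real.mul_rpow (by positivity) (by positivity), ← Real.rpow_mul hB0,
            ← Real.rpow_mul hN0, ← Real.rpow_mul hN0]
          congr 2 <;> field_simp
      _ ≤ (∫ x, (u x) ^ 2) ^ (s / 2) * (K * A ^ (1 / (2 : ℝ))) ^ (1 - s) := by
          gcongr
      _ = _ := by
          rw [Real.mul_rpow hK0 (by positivity), ← Real.rpow_mul hA0,
            show (1 / 2 : ℝ) * (1 - s) = (1 - s) / 2 by ring]
          ring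
  refine hmain.trans ?_
  rw [mul_assoc]
  refine mul_le_mul_of_nonneg_left ?_ (by positivity)
  rcases hs0.eq_or_lt with h0 | hspos
  · rw [← h0]
    simp only [zero_div, Real.rpow_zero, one_mul, sub_zero]
    rw [← Real.sqrt_eq_rpow]
    exact Real.sqrt_le_sqrt (by nlinarith)
  rcases hB0.eq_or_lt with h0 | hBpos
  · rw [← h0, Real.zero_rpow (by positivity), zero_mul]
    have hl : 0 ≤ lam1 n Ω := by
      apply Real.sInf_nonneg
      rintro _ ⟨w, -, -, -, -, rfl⟩
      exact div_nonneg (integral_nonneg fun x => by positivity)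
        (integral_nonneg fun x => by positivity)
    positivity
  obtain ⟨hl, hlA⟩ := plum_lam1 hn hΩb hu hsupp hsub hBpos
  exact plum_real hA0 hBpos hl hspos hs1 hτ hlA

end
end
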